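/- Let m ∈ (0,1), L > 0, and let g : [0,L] → [0,1] be measurable. Set F(u) := ∫_0^u g(w) dw and let F̂ be the least concave majorant of F on [0,L]; let ĝ : [0,L] → [0,1] be a measurable function with ∫_0^u ĝ(w) dw = F̂(u) for all u ∈ [0,L]. If a measurable φ : [0,L] → [0,1] satisfies ∫_0^u φ(w) dw ≥ F(u) for all u ∈ [0,L], ∫_0^L φ(w) dw = F(L), and ∫_0^L h_m(φ(u)) du = ∫_0^L h_m(ĝ(u)) du, then φ = ĝ almost everywhere; that is, the minimizer of the variational problem is unique up to almost-everywhere equality. -/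

import Mathlib

open MeasureTheory Set

noncomputable section

/-- The least concave majorant of `F` on `[0,L]`: the pointwise infimum of all concave
functions on `[0,L]` dominating `F` there. -/
noncomputable def lcMaj (L : ℝ) (F : ℝ → ℝ) (u : ℝ) : ℝ :=
  sInf {y : ℝ | ∃ G : ℝ → ℝ,
    ConcaveOn ℝ (Set.Icc 0 L) G ∧ (∀ x ∈ Set.Icc 0 L, F x ≤ G x) ∧ y = G u}

/-- `h_m(x) = x log(x/m) + (1-x) log((1-x)/(1-m))`, with the convention `0 log 0 = 0`. -/
noncomputable def hFun (m x : ℝ) : ℝ :=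
  x * Real.log (x / m) + (1 - x) * Real.log ((1 - x) / (1 - m))

/-!
For every level `c` the integral of `(ĝ - c)⁺` is the maximum of `F̂ u - c u`. If `Φ u = ∫₀ᵘ φ`
dominates `F`, then `K = ∫₀ᴸ (φ - c)⁺` makes `c u + K` a concave majorant of `F`, so that
`∫₀ᴸ (ĝ - c)⁺ ≤ ∫₀ᴸ (φ - c)⁺` for all `c`. Together with the mass constraint this says that `φ`
majorizes `ĝ`, and majorization passes to integrals of convex functions because these are limits
of affine functions plus nonnegative combinations of the hinges `x ↦ (x - c)⁺`. Hence `ĝ`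
minimizes every convex functional over the convex set of admissible functions; comparing a
minimizer `φ` with the midpoint of `φ` and `ĝ`, strict convexity forces `φ = ĝ`.
-/

section LeastConcaveMajorant

variable {L u : ℝ} {F G : ℝ → ℝ}

lemma lcMaj_le (hG : ConcaveOn ℝ (Icc 0 L) G) (hFG : ∀ x ∈ Icc 0 L, F x ≤ G x)
    (hu : u ∈ Icc 0 L) : lcMaj L F u ≤ G u := by
  refine csInf_le ⟨F u, ?_⟩ ⟨G, hG, hFG, rfl⟩
  rintro _ ⟨H, -, hFH, rfl⟩
  exact hFH u hu

lemma le_lcMaj_of_forall_le {y : ℝ} (hF : BddAbove (F '' Icc 0 L))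
    (hy : ∀ G, ConcaveOn ℝ (Icc 0 L) G → (∀ x ∈ Icc 0 L, F x ≤ G x) → y ≤ G u) :
    y ≤ lcMaj L F u := by
  obtain ⟨M, hM⟩ := hF
  refine le_csInf ⟨M, fun _ ↦ M, concaveOn_const M (convex_Icc 0 L), fun x hx ↦ ?_, rfl⟩ ?_
  · exact hM (mem_image_of_mem F hx)
  · rintro _ ⟨G, hG, hFG, rfl⟩
    exact hy G hG hFG

lemma le_lcMaj (hF : BddAbove (F '' Icc 0 L)) (hu : u ∈ Icc 0 L) : F u ≤ lcMaj L F u :=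
  le_lcMaj_of_forall_le hF fun _ _ hFG ↦ hFG u hu

lemma concaveOn_lcMaj (hF : BddAbove (F '' Icc 0 L)) : ConcaveOn ℝ (Icc 0 L) (lcMaj L F) := by
  refine ⟨convex_Icc 0 L, fun x hx y hy p q hp hq hpq ↦ le_lcMaj_of_forall_le hF ?_⟩
  intro G hG hFG
  calc p • lcMaj L F x + q • lcMaj L F y ≤ p • G x + q • G y := by
        gcongr
        exacts [lcMaj_le hG hFG hx, lcMaj_le hG hFG hy]
    _ ≤ G (p • x + q • y) := hG.2 hx hy hp hq hpq

end LeastConcaveMajorant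

section ConcavePrimitive

variable {s : Set ℝ} {J f : ℝ → ℝ} {a b c : ℝ}

lemma monotoneOn_inter_Iic_of_concaveOn_of_isMaxOn (hJ : ConcaveOn ℝ s J) (hc : c ∈ s)
    (hmax : IsMaxOn J s c) : MonotoneOn J (s ∩ Iic c) := by
  intro x hx y hy hxy
  have hy_mem : y ∈ segment ℝ x c := by
    rw [segment_eq_Icc hx.2]
    exact ⟨hxy, hy.2⟩
  exact (le_min le_rfl (hmax hx.1)).trans (hJ.ge_on_segment hx.1 hc hy_mem)

lemma antitoneOn_inter_Ici_of_concaveOn_of_isMaxOn (hJ : ConcaveOn ℝ s J) (hc : c ∈ s)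
    (hmax : IsMaxOn J s c) : AntitoneOn J (s ∩ Ici c) := by
  intro x hx y hy hxy
  have hx_mem : x ∈ segment ℝ c y := by
    rw [segment_eq_Icc hy.2]
    exact ⟨hx.2, hxy⟩
  exact (le_min (hmax hy.1) le_rfl).trans (hJ.ge_on_segment hc hy.1 hx_mem)

lemma nonneg_of_hasDerivAt_of_monotoneOn_Icc {J' x : ℝ} (hderiv : HasDerivAt J J' x)
    (hJ : MonotoneOn J (Icc a b)) (hx : x ∈ Ioc a b) : 0 ≤ J' :=
  hderiv.hasDerivWithinAt.nonneg_of_monotoneOn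
    (uniqueDiffOn_Icc (hx.1.trans_le hx.2) x (Ioc_subset_Icc_self hx)).accPt hJ

lemma nonpos_of_hasDerivAt_of_antitoneOn_Icc {J' x : ℝ} (hderiv : HasDerivAt J J' x)
    (hJ : AntitoneOn J (Icc a b)) (hx : x ∈ Ioc a b) : J' ≤ 0 :=
  neg_nonneg.1 (nonneg_of_hasDerivAt_of_monotoneOn_Icc hderiv.neg hJ.neg hx)

lemma intervalIntegrable_posPart (hf : IntervalIntegrable f volume a b) :
    IntervalIntegrable (fun w ↦ max (f w) 0) volume a b :=
  ⟨hf.1.pos_part, hf.2.pos_part⟩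

lemma continuousOn_primitive_Icc (hab : a ≤ b) (hf : IntervalIntegrable f volume a b) :
    ContinuousOn (fun u ↦ ∫ w in a..u, f w) (Icc a b) := by
  simpa only [uIcc_of_le hab] using
    intervalIntegral.continuousOn_primitive_interval' hf left_mem_uIcc

lemma integral_posPart_eq_of_isMaxOn_concaveOn_primitive (hf : IntervalIntegrable f volume a b)
    (hconc : ConcaveOn ℝ (Icc a b) fun u ↦ ∫ w in a..u, f w) (hc : c ∈ Icc a b)
    (hmax : IsMaxOn (fun u ↦ ∫ w in a..u, f w) (Icc a b) c) :
    ∫ w in a..b, max (f w) 0 = ∫ w in a..c, f w := by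
  have hab : a ≤ b := hc.1.trans hc.2
  have hderiv : ∀ᵐ x, x ∈ Icc a b → HasDerivAt (fun u ↦ ∫ w in a..u, f w) (f x) x := by
    filter_upwards [hf.ae_hasDerivAt_integral] with x hx hx_mem
    rw [uIcc_of_le hab] at hx
    exact hx hx_mem a (left_mem_Icc.2 hab)
  have hleft : ∫ w in a..c, max (f w) 0 = ∫ w in a..c, f w := by
    refine intervalIntegral.integral_congr_ae ?_
    filter_upwards [hderiv] with x hx hx_mem
    rw [uIoc_of_le hc.1] at hx_mem
    have hmono := (monotoneOn_inter_Iic_of_concaveOn_of_isMaxOn hconc hc hmax).mono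
      (fun y hy ↦ ⟨⟨hy.1, hy.2.trans hc.2⟩, hy.2⟩ : Icc a c ⊆ Icc a b ∩ Iic c)
    exact max_eq_left <| nonneg_of_hasDerivAt_of_monotoneOn_Icc
      (hx ⟨hx_mem.1.le, hx_mem.2.trans hc.2⟩) hmono hx_mem
  have hright : ∫ w in c..b, max (f w) 0 = ∫ _ in c..b, (0 : ℝ) := by
    refine intervalIntegral.integral_congr_ae ?_
    filter_upwards [hderiv] with x hx hx_mem
    rw [uIoc_of_le hc.2] at hx_mem
    have hanti := (antitoneOn_inter_Ici_of_concaveOn_of_isMaxOn hconc hc hmax).mono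
      (fun y hy ↦ ⟨⟨hc.1.trans hy.1, hy.2⟩, hy.1⟩ : Icc c b ⊆ Icc a b ∩ Ici c)
    exact max_eq_right <| nonpos_of_hasDerivAt_of_antitoneOn_Icc
      (hx ⟨hc.1.trans hx_mem.1.le, hx_mem.2⟩) hanti hx_mem
  have hpos := intervalIntegrable_posPart hf
  have hc' : c ∈ uIcc a b := Icc_subset_uIcc hc
  rw [← intervalIntegral.integral_add_adjacent_intervals
      (hpos.mono_set (uIcc_subset_uIcc_left hc')) (hpos.mono_set (uIcc_subset_uIcc_right hc')),
    hleft, hright, intervalIntegral.integral_zero, add_zero]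

lemma integral_posPart_le_of_concaveOn_primitive {K : ℝ} (hab : a ≤ b)
    (hf : IntervalIntegrable f volume a b)
    (hconc : ConcaveOn ℝ (Icc a b) fun u ↦ ∫ w in a..u, f w)
    (hK : ∀ u ∈ Icc a b, ∫ w in a..u, f w ≤ K) :
    ∫ w in a..b, max (f w) 0 ≤ K := by
  obtain ⟨c, hc, hmax⟩ :=
    isCompact_Icc.exists_isMaxOn (nonempty_Icc.2 hab) (continuousOn_primitive_Icc hab hf)
  exact (integral_posPart_eq_of_isMaxOn_concaveOn_primitive hf hconc hc hmax).trans_le (hK c hc)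

lemma integral_le_integral_posPart (hf : IntervalIntegrable f volume a b) (hc : c ∈ Icc a b) :
    ∫ w in a..c, f w ≤ ∫ w in a..b, max (f w) 0 := by
  have hpos := intervalIntegrable_posPart hf
  have hsub : uIcc a c ⊆ uIcc a b := uIcc_subset_uIcc_left (Icc_subset_uIcc hc)
  calc ∫ w in a..c, f w ≤ ∫ w in a..c, max (f w) 0 :=
        intervalIntegral.integral_mono_on hc.1 (hf.mono_set hsub) (hpos.mono_set hsub)
          fun _ _ ↦ le_max_left _ _
    _ ≤ ∫ w in a..b, max (f w) 0 :=
        intervalIntegral.integral_mono_interval le_rfl hc.1 hc.2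
          (.of_forall fun _ ↦ le_max_right _ _) hpos

end ConcavePrimitive

section LinInterp

variable {h : ℝ → ℝ} {t : ℕ → ℝ} {n : ℕ} {x : ℝ}

/-- The piecewise linear interpolant of `h` at the nodes `t 0 ≤ t 1 ≤ ⋯ ≤ t n`, constant outside
`[t 0, t n]`. It is written as a sum of ramps, one for each cell, to expose it as a combination of
hinges `x ↦ (x - t k)⁺`. -/
def linInterp (h : ℝ → ℝ) (t : ℕ → ℝ) (n : ℕ) (x : ℝ) : ℝ :=
  h (t 0) + ∑ k ∈ Finset.range n,
    slope h (t k) (t (k + 1)) * (max (x - t k) 0 - max (x - t (k + 1)) 0)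

lemma linInterp_succ : linInterp h t (n + 1) x = linInterp h t n x +
    slope h (t n) (t (n + 1)) * (max (x - t n) 0 - max (x - t (n + 1)) 0) := by
  rw [linInterp, linInterp, Finset.sum_range_succ, add_assoc]

lemma slope_mul_sub (h : ℝ → ℝ) (x y : ℝ) : slope h x y * (y - x) = h y - h x := by
  simpa only [smul_eq_mul, mul_comm, vsub_eq_sub] using sub_smul_slope h x y

lemma linInterp_of_le (ht : Monotone t) (hx : t n ≤ x) : linInterp h t n x = h (t n) := by
  induction n with
  | zero => simp [linInterp]
  | succ n ih =>
    have hn : t n ≤ x := (ht n.le_succ).trans hx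
    rw [linInterp_succ, ih hn, max_eq_left (sub_nonneg.2 hn), max_eq_left (sub_nonneg.2 hx),
      sub_sub_sub_cancel_left, slope_mul_sub]
    ring

lemma linInterp_succ_of_le (ht : Monotone t) (hx : x ≤ t n) :
    linInterp h t (n + 1) x = linInterp h t n x := by
  rw [linInterp_succ, max_eq_right (sub_nonpos.2 hx),
    max_eq_right (sub_nonpos.2 (hx.trans (ht n.le_succ)))]
  ring

lemma linInterp_succ_eq_lineMap (ht : StrictMono t) (hx : x ∈ Icc (t n) (t (n + 1))) :
    linInterp h t (n + 1) x =
      AffineMap.lineMap (h (t n)) (h (t (n + 1))) ((x - t n) / (t (n + 1) - t n)) := by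
  rw [linInterp_succ, linInterp_of_le ht.monotone hx.1, max_eq_left (sub_nonneg.2 hx.1),
    max_eq_right (sub_nonpos.2 hx.2), AffineMap.lineMap_apply_ring', slope_def_field]
  ring

lemma dist_linInterp_le {ε : ℝ} (hε : 0 ≤ ε) (ht : StrictMono t)
    (hosc : ∀ k < n, ∀ x ∈ Icc (t k) (t (k + 1)), ∀ y ∈ Icc (t k) (t (k + 1)),
      dist (h x) (h y) ≤ ε) (hx : x ∈ Icc (t 0) (t n)) :
    dist (linInterp h t n x) (h x) ≤ ε := by
  induction n with
  | zero => simpa [linInterp, le_antisymm hx.2 hx.1] using hε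
  | succ n ih =>
    rcases le_total x (t n) with hxn | hxn
    · rw [linInterp_succ_of_le ht.monotone hxn]
      exact ih (fun k hk ↦ hosc k (hk.trans n.lt_succ_self)) ⟨hx.1, hxn⟩
    · have hlt : t n < t (n + 1) := ht n.lt_succ_self
      have hosc' (y) (hy : y ∈ Icc (t n) (t (n + 1))) : h y ∈ Metric.closedBall (h x) ε :=
        hosc n n.lt_succ_self y hy x ⟨hxn, hx.2⟩
      rw [linInterp_succ_eq_lineMap ht ⟨hxn, hx.2⟩]
      exact (convex_closedBall (h x) ε).lineMap_mem (hosc' _ (left_mem_Icc.2 hlt.le))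
        (hosc' _ (right_mem_Icc.2 hlt.le))
        ⟨div_nonneg (sub_nonneg.2 hxn) (sub_pos.2 hlt).le,
          (div_le_one (sub_pos.2 hlt)).2 (sub_le_sub_right hx.2 _)⟩

lemma exists_dist_linInterp_le {a b ε : ℝ} (hab : a < b) (hh : ContinuousOn h (Icc a b))
    (hε : 0 < ε) : ∃ (t : ℕ → ℝ) (n : ℕ), StrictMono t ∧ t 0 = a ∧ t n = b ∧
      ∀ x ∈ Icc a b, dist (linInterp h t n x) (h x) ≤ ε := by
  obtain ⟨δ, hδ, hosc⟩ := Metric.uniformContinuousOn_iff_le.1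
    (isCompact_Icc.uniformContinuousOn_of_continuous hh) ε hε
  obtain ⟨n, hn⟩ := exists_nat_gt ((b - a) / δ)
  have hba : 0 < b - a := sub_pos.2 hab
  have hn_pos : (0 : ℝ) < n := (div_pos hba hδ).trans hn
  set t : ℕ → ℝ := fun k ↦ a + k * ((b - a) / n) with ht_def
  have ht : StrictMono t := fun i j hij ↦ by
    simp only [ht_def]
    gcongr
  have ht_zero : t 0 = a := by simp [ht_def]
  have ht_last : t n = b := by
    simp only [ht_def]
    field_simp
    ring
  have hmesh (k : ℕ) : t (k + 1) - t k ≤ δ := by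
    have hstep : (b - a) / n ≤ δ := (div_le_comm₀ hn_pos hδ).2 hn.le
    simp only [ht_def]
    push_cast
    linarith
  refine ⟨t, n, ht, ht_zero, ht_last, fun x hx ↦ dist_linInterp_le hε.le ht ?_ ?_⟩
  · intro k hk x hx y hy
    have hcell : Icc (t k) (t (k + 1)) ⊆ Icc a b := by
      rw [← ht_zero, ← ht_last]
      exact Icc_subset_Icc (ht.monotone k.zero_le) (ht.monotone hk)
    exact hosc x (hcell hx) y (hcell hy) ((Real.dist_le_of_mem_Icc hx hy).trans (hmesh k))
  · rwa [ht_zero, ht_last]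

lemma slope_le_slope_succ {k : ℕ} (hh : ConvexOn ℝ (Icc (t 0) (t n)) h)
    (ht : StrictMono t) (hk : k + 1 < n) :
    slope h (t k) (t (k + 1)) ≤ slope h (t (k + 1)) (t (k + 2)) := by
  have hmem {j : ℕ} (hj : j ≤ n) : t j ∈ Icc (t 0) (t n) :=
    ⟨ht.monotone j.zero_le, ht.monotone hj⟩
  simpa only [slope_def_field] using
    hh.slope_mono_adjacent (hmem (by lia)) (hmem (by lia)) (ht k.lt_succ_self)
      (ht (k + 1).lt_succ_self)

end LinInterp

section Majorization

lemma sub_le_sum_mul_sub_succ {s d : ℕ → ℝ} {n : ℕ} (hs : ∀ k < n, s k ≤ s (k + 1))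
    (hd : ∀ k, 0 ≤ d k) :
    s 0 * d 0 - s n * d (n + 1) ≤ ∑ k ∈ Finset.range (n + 1), s k * (d k - d (k + 1)) := by
  induction n with
  | zero => simp [mul_sub]
  | succ n ih =>
    have hstep : s n * d (n + 1) ≤ s (n + 1) * d (n + 1) :=
      mul_le_mul_of_nonneg_right (hs n n.lt_succ_self) (hd (n + 1))
    rw [Finset.sum_range_succ]
    linarith [ih fun k hk ↦ hs k (hk.trans n.lt_succ_self)]

variable {α : Type*} [MeasurableSpace α] {μ : Measure α} {a b : ℝ} {h : ℝ → ℝ} {f φ : α → ℝ}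

lemma integral_posPart_sub_eq_zero_of_le {c : ℝ} (hc : ∀ᵐ x ∂μ, f x ≤ c) :
    ∫ x, max (f x - c) 0 ∂μ = 0 := by
  rw [integral_congr_ae (hc.mono fun x hx ↦ max_eq_right (sub_nonpos.2 hx)), integral_zero]

variable [IsFiniteMeasure μ]

lemma integrable_posPart_sub (hf : Integrable f μ) (c : ℝ) :
    Integrable (fun x ↦ max (f x - c) 0) μ :=
  (hf.sub (integrable_const c)).pos_part

lemma integrable_comp_of_continuousOn (hh : ContinuousOn h (Icc a b)) (hf : AEMeasurable f μ)
    (hf_mem : ∀ᵐ x ∂μ, f x ∈ Icc a b) : Integrable (fun x ↦ h (f x)) μ := by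
  classical
  obtain ⟨C, hC⟩ := isCompact_Icc.exists_bound_of_continuousOn hh
  have hh_meas : Measurable ((Icc a b).piecewise h 0) :=
    hh.measurable_piecewise continuousOn_const measurableSet_Icc
  have hcomp : (fun x ↦ (Icc a b).piecewise h 0 (f x)) =ᵐ[μ] fun x ↦ h (f x) :=
    hf_mem.mono fun x hx ↦ piecewise_eq_of_mem _ _ _ hx
  exact .of_bound ((hh_meas.comp_aemeasurable hf).congr hcomp).aestronglyMeasurable C
    (hf_mem.mono fun x hx ↦ hC _ hx)

lemma integrable_ramp_comp (hf : Integrable f μ) (c x y : ℝ) :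
    Integrable (fun z ↦ c * (max (f z - x) 0 - max (f z - y) 0)) μ :=
  ((integrable_posPart_sub hf x).sub (integrable_posPart_sub hf y)).const_mul c

lemma integrable_linInterp_comp (hf : Integrable f μ) (t : ℕ → ℝ) (n : ℕ) :
    Integrable (fun x ↦ linInterp h t n (f x)) μ :=
  (integrable_const _).add (integrable_finsetSum _ fun _ _ ↦ integrable_ramp_comp hf _ _ _)

lemma integral_linInterp_comp (hf : Integrable f μ) (t : ℕ → ℝ) (n : ℕ) :
    ∫ x, linInterp h t n (f x) ∂μ = μ.real univ * h (t 0) + ∑ k ∈ Finset.range n,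
      slope h (t k) (t (k + 1)) *
        (∫ x, max (f x - t k) 0 ∂μ - ∫ x, max (f x - t (k + 1)) 0 ∂μ) := by
  have hpos := integrable_posPart_sub hf
  have hramp := integrable_ramp_comp hf
  simp only [linInterp]
  rw [integral_add (integrable_const _) (integrable_finsetSum _ fun k _ ↦ hramp _ _ _),
    integral_finsetSum _ fun k _ ↦ hramp _ _ _, integral_const, smul_eq_mul]
  simp only [integral_const_mul, integral_sub (hpos _) (hpos _)]

lemma integral_posPart_sub_eq_of_le {c : ℝ} (hf : Integrable f μ) (hc : ∀ᵐ x ∂μ, c ≤ f x) :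
    ∫ x, max (f x - c) 0 ∂μ = ∫ x, f x ∂μ - μ.real univ * c := by
  rw [integral_congr_ae (hc.mono fun x hx ↦ max_eq_left (sub_nonneg.2 hx)),
    integral_sub hf (integrable_const c), integral_const, smul_eq_mul]

lemma integral_linInterp_comp_le {t : ℕ → ℝ} {n : ℕ} (hh : ConvexOn ℝ (Icc (t 0) (t n)) h)
    (ht : StrictMono t) (hf : Integrable f μ) (hφ : Integrable φ μ)
    (hf_mem : ∀ᵐ x ∂μ, f x ∈ Icc (t 0) (t n)) (hφ_mem : ∀ᵐ x ∂μ, φ x ∈ Icc (t 0) (t n))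
    (hmass : ∫ x, φ x ∂μ ≤ ∫ x, f x ∂μ)
    (hpos : ∀ c, ∫ x, max (f x - c) 0 ∂μ ≤ ∫ x, max (φ x - c) 0 ∂μ) :
    ∫ x, linInterp h t n (f x) ∂μ ≤ ∫ x, linInterp h t n (φ x) ∂μ := by
  rw [integral_linInterp_comp hf, integral_linInterp_comp hφ]
  set d : ℕ → ℝ := fun k ↦ ∫ x, max (φ x - t k) 0 ∂μ - ∫ x, max (f x - t k) 0 ∂μ with hd
  have hd_nonneg (k : ℕ) : 0 ≤ d k := sub_nonneg.2 (hpos (t k))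
  have hd_zero : d 0 = 0 := by
    refine le_antisymm ?_ (hd_nonneg 0)
    simp only [hd]
    rw [integral_posPart_sub_eq_of_le hf (hf_mem.mono fun _ hx ↦ hx.1),
      integral_posPart_sub_eq_of_le hφ (hφ_mem.mono fun _ hx ↦ hx.1)]
    linarith
  have hd_last : d n = 0 := by
    simp only [hd]
    rw [integral_posPart_sub_eq_zero_of_le (hf_mem.mono fun _ hx ↦ hx.2),
      integral_posPart_sub_eq_zero_of_le (hφ_mem.mono fun _ hx ↦ hx.2), sub_zero]
  have hsum : 0 ≤ ∑ k ∈ Finset.range n, slope h (t k) (t (k + 1)) * (d k - d (k + 1)) := by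
    cases n with
    | zero => simp
    | succ n =>
      have hslope (k) (hk : k < n) := slope_le_slope_succ hh ht (Nat.succ_lt_succ hk)
      simpa only [hd_zero, hd_last, mul_zero, sub_zero] using
        sub_le_sum_mul_sub_succ (s := fun k ↦ slope h (t k) (t (k + 1))) hslope hd_nonneg
  rw [add_le_add_iff_left, ← sub_nonneg, ← Finset.sum_sub_distrib]
  refine hsum.trans_eq (Finset.sum_congr rfl fun k _ ↦ ?_)
  simp only [hd]
  ring

theorem integral_comp_le_integral_comp_of_convexOn (hab : a < b) (hh : ConvexOn ℝ (Icc a b) h)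
    (hh_cont : ContinuousOn h (Icc a b)) (hf : AEMeasurable f μ) (hφ : AEMeasurable φ μ)
    (hf_mem : ∀ᵐ x ∂μ, f x ∈ Icc a b) (hφ_mem : ∀ᵐ x ∂μ, φ x ∈ Icc a b)
    (hmass : ∫ x, φ x ∂μ ≤ ∫ x, f x ∂μ)
    (hpos : ∀ c, ∫ x, max (f x - c) 0 ∂μ ≤ ∫ x, max (φ x - c) 0 ∂μ) :
    ∫ x, h (f x) ∂μ ≤ ∫ x, h (φ x) ∂μ := by
  refine le_of_forall_pos_le_add fun η hη ↦ ?_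
  obtain ⟨ε, hε, hεη⟩ := exists_pos_mul_lt hη (2 * μ.real univ)
  obtain ⟨t, n, ht, rfl, rfl, happrox⟩ := exists_dist_linInterp_le hab hh_cont hε
  have hf_int := Integrable.of_mem_Icc _ _ hf hf_mem
  have hφ_int := Integrable.of_mem_Icc _ _ hφ hφ_mem
  have hdist {q : α → ℝ} (hq : AEMeasurable q μ) (hq_mem : ∀ᵐ x ∂μ, q x ∈ Icc (t 0) (t n)) :
      |∫ x, linInterp h t n (q x) ∂μ - ∫ x, h (q x) ∂μ| ≤ ε * μ.real univ := by
    rw [← integral_sub (integrable_linInterp_comp (.of_mem_Icc _ _ hq hq_mem) t n)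
      (integrable_comp_of_continuousOn hh_cont hq hq_mem), ← Real.norm_eq_abs]
    refine norm_integral_le_of_norm_le_const (hq_mem.mono fun x hx ↦ ?_)
    rw [← dist_eq_norm]
    exact happrox (q x) hx
  have hinterp := integral_linInterp_comp_le hh ht hf_int hφ_int hf_mem hφ_mem hmass hpos
  linarith [(abs_le.1 (hdist hf hf_mem)).1, (abs_le.1 (hdist hφ hφ_mem)).2]

end Majorization

section Uniqueness

lemma map_half_add_lt_of_strictConvexOn {s : Set ℝ} {h : ℝ → ℝ} {x y : ℝ}
    (hh : StrictConvexOn ℝ s h) (hx : x ∈ s) (hy : y ∈ s) (hxy : x ≠ y) :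
    h ((x + y) / 2) < (h x + h y) / 2 := by
  have hlt := hh.2 hx hy hxy one_half_pos one_half_pos (add_halves 1)
  simp only [smul_eq_mul, ← mul_add] at hlt
  rwa [one_div_mul_eq_div, one_div_mul_eq_div] at hlt

variable {α : Type*} [MeasurableSpace α] {μ : Measure α} {s : Set ℝ} {h : ℝ → ℝ} {f φ : α → ℝ}

lemma ae_eq_of_le_integral_comp_half_add (hh : StrictConvexOn ℝ s h)
    (hf_mem : ∀ᵐ x ∂μ, f x ∈ s) (hφ_mem : ∀ᵐ x ∂μ, φ x ∈ s)
    (hf : Integrable (fun x ↦ h (f x)) μ) (hφ : Integrable (fun x ↦ h (φ x)) μ)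
    (hmid : Integrable (fun x ↦ h ((φ x + f x) / 2)) μ)
    (hle : (∫ x, h (φ x) ∂μ + ∫ x, h (f x) ∂μ) / 2 ≤ ∫ x, h ((φ x + f x) / 2) ∂μ) :
    ∀ᵐ x ∂μ, φ x = f x := by
  set gap : α → ℝ := fun x ↦ (h (φ x) + h (f x)) / 2 - h ((φ x + f x) / 2) with hgap
  have hsum_int : Integrable (fun x ↦ (h (φ x) + h (f x)) / 2) μ := (hφ.add hf).div_const 2
  have hgap_int : Integrable gap μ := hsum_int.sub hmid
  have hgap_pos : ∀ᵐ x ∂μ, φ x ≠ f x → 0 < gap x := by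
    filter_upwards [hφ_mem, hf_mem] with x hφx hfx hne
    exact sub_pos.2 (map_half_add_lt_of_strictConvexOn hh hφx hfx hne)
  have hgap_nonneg : 0 ≤ᵐ[μ] gap := by
    filter_upwards [hgap_pos] with x hx
    by_cases heq : φ x = f x
    · simp [hgap, heq]
    · exact (hx heq).le
  have hgap_integral : ∫ x, gap x ∂μ = 0 := by
    refine le_antisymm ?_ (integral_nonneg_of_ae hgap_nonneg)
    rw [hgap, integral_sub hsum_int hmid, integral_div, integral_add hφ hf]
    exact sub_nonpos.2 hle
  have hgap_zero := (integral_eq_zero_iff_of_nonneg_ae hgap_nonneg hgap_int).1 hgap_integral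
  filter_upwards [hgap_pos, hgap_zero] with x hpos hzero
  by_contra hne
  exact (hpos hne).ne' hzero

end Uniqueness

section Admissible

/-- The competitors of the variational problem with obstacle `F`: functions on `[0, L]` with
values in `[a, b]` whose primitive stays above `F` and meets it at `L`. Measurability and range
are only required almost everywhere on `[0, L]`. -/
structure IsAdmissible (a b L : ℝ) (F φ : ℝ → ℝ) : Prop where
  aemeasurable : AEMeasurable φ (volume.restrict (Icc 0 L))
  mem_Icc : ∀ᵐ u ∂volume.restrict (Icc 0 L), φ u ∈ Icc a b
  le_integral : ∀ u ∈ Icc 0 L, F u ≤ ∫ w in (0 : ℝ)..u, φ w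
  integral_eq : ∫ w in (0 : ℝ)..L, φ w = F L

variable {a b L : ℝ} {F f φ ψ h : ℝ → ℝ}

lemma integral_eq_setIntegral_Icc (hL : 0 ≤ L) (f : ℝ → ℝ) :
    ∫ u in (0 : ℝ)..L, f u = ∫ u in Icc 0 L, f u := by
  rw [intervalIntegral.integral_of_le hL, integral_Icc_eq_integral_Ioc]

lemma bddAbove_image_of_le_integral (hL : 0 ≤ L) (hφ : IntervalIntegrable φ volume 0 L)
    (hF : ∀ u ∈ Icc 0 L, F u ≤ ∫ w in (0 : ℝ)..u, φ w) : BddAbove (F '' Icc 0 L) := by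
  obtain ⟨M, hM⟩ := isCompact_Icc.bddAbove_image (continuousOn_primitive_Icc hL hφ)
  refine ⟨M, ?_⟩
  rintro _ ⟨u, hu, rfl⟩
  exact (hF u hu).trans (hM (mem_image_of_mem _ hu))

lemma integral_posPart_sub_le_of_integral_eq_lcMaj (hL : 0 ≤ L)
    (hf : IntervalIntegrable f volume 0 L) (hφ : IntervalIntegrable φ volume 0 L)
    (hf_prim : ∀ u ∈ Icc 0 L, ∫ w in (0 : ℝ)..u, f w = lcMaj L F u)
    (hφ_dom : ∀ u ∈ Icc 0 L, F u ≤ ∫ w in (0 : ℝ)..u, φ w) (c : ℝ) :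
    ∫ u in (0 : ℝ)..L, max (f u - c) 0 ≤ ∫ u in (0 : ℝ)..L, max (φ u - c) 0 := by
  have hprim {q : ℝ → ℝ} (hq : IntervalIntegrable q volume 0 L) {u : ℝ} (hu : u ∈ Icc 0 L) :
      ∫ w in (0 : ℝ)..u, (q w - c) = (∫ w in (0 : ℝ)..u, q w) - u * c := by
    rw [intervalIntegral.integral_sub (hq.mono_set (uIcc_subset_uIcc_left (Icc_subset_uIcc hu)))
      intervalIntegrable_const, intervalIntegral.integral_const, sub_zero, smul_eq_mul]
  set K : ℝ := ∫ u in (0 : ℝ)..L, max (φ u - c) 0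
  have hmaj (u) (hu : u ∈ Icc 0 L) : F u ≤ u * c + K := by
    have := integral_le_integral_posPart (hφ.sub (intervalIntegrable_const (c := c))) hu
    rw [hprim hφ hu] at this
    linarith [hφ_dom u hu]
  have hf_shift {u : ℝ} (hu : u ∈ Icc 0 L) :
      ∫ w in (0 : ℝ)..u, (f w - c) = lcMaj L F u - u * c := by
    rw [hprim hf hu, hf_prim u hu]
  have hconc : ConcaveOn ℝ (Icc 0 L) fun u ↦ ∫ w in (0 : ℝ)..u, (f w - c) :=
    ((concaveOn_lcMaj (bddAbove_image_of_le_integral hL hφ hφ_dom)).sub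
      ((LinearMap.mulRight ℝ c).convexOn (convex_Icc 0 L))).congr fun u hu ↦ (hf_shift hu).symm
  refine integral_posPart_le_of_concaveOn_primitive hL (hf.sub intervalIntegrable_const) hconc
    fun u hu ↦ ?_
  rw [hf_shift hu, sub_le_iff_le_add']
  exact lcMaj_le (((LinearMap.mulRight ℝ c).concaveOn (convex_Icc 0 L)).add_const K) hmaj hu

namespace IsAdmissible

lemma intervalIntegrable (hφ : IsAdmissible a b L F φ) (hL : 0 ≤ L) :
    IntervalIntegrable φ volume 0 L :=
  (intervalIntegrable_iff_integrableOn_Icc_of_le hL).2 (.of_mem_Icc a b hφ.aemeasurable hφ.mem_Icc)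

lemma half_add (hL : 0 ≤ L) (hφ : IsAdmissible a b L F φ) (hψ : IsAdmissible a b L F ψ) :
    IsAdmissible a b L F fun u ↦ (φ u + ψ u) / 2 := by
  have hprim {u : ℝ} (hu : u ∈ Icc 0 L) : ∫ w in (0 : ℝ)..u, (φ w + ψ w) / 2 =
      ((∫ w in (0 : ℝ)..u, φ w) + ∫ w in (0 : ℝ)..u, ψ w) / 2 := by
    have hsub : uIcc 0 u ⊆ uIcc 0 L := uIcc_subset_uIcc_left (Icc_subset_uIcc hu)
    rw [intervalIntegral.integral_div, intervalIntegral.integral_add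
      ((hφ.intervalIntegrable hL).mono_set hsub) ((hψ.intervalIntegrable hL).mono_set hsub)]
  refine ⟨(hφ.aemeasurable.add hψ.aemeasurable).div_const 2, ?_, fun u hu ↦ ?_, ?_⟩
  · filter_upwards [hφ.mem_Icc, hψ.mem_Icc] with u hφu hψu
    constructor <;> linarith [hφu.1, hφu.2, hψu.1, hψu.2]
  · linarith [hprim hu, hφ.le_integral u hu, hψ.le_integral u hu]
  · rw [hprim (right_mem_Icc.2 hL), hφ.integral_eq, hψ.integral_eq, add_self_div_two]

lemma of_integral_eq_lcMaj (hL : 0 ≤ L) (hφ : IsAdmissible a b L F φ)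
    (hf : AEMeasurable f (volume.restrict (Icc 0 L)))
    (hf_mem : ∀ᵐ u ∂volume.restrict (Icc 0 L), f u ∈ Icc a b)
    (hf_prim : ∀ u ∈ Icc 0 L, ∫ w in (0 : ℝ)..u, f w = lcMaj L F u) :
    IsAdmissible a b L F f := by
  have hf_int : IntegrableOn f (Icc 0 L) := .of_mem_Icc a b hf hf_mem
  have hφ_int : IntegrableOn φ (Icc 0 L) := .of_mem_Icc a b hφ.aemeasurable hφ.mem_Icc
  have hdom (u) (hu : u ∈ Icc 0 L) : F u ≤ ∫ w in (0 : ℝ)..u, f w :=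
    (le_lcMaj (bddAbove_image_of_le_integral hL (hφ.intervalIntegrable hL) hφ.le_integral)
      hu).trans_eq (hf_prim u hu).symm
  have hmass := integral_posPart_sub_le_of_integral_eq_lcMaj hL
    ((intervalIntegrable_iff_integrableOn_Icc_of_le hL).2 hf_int) (hφ.intervalIntegrable hL) hf_prim
    hφ.le_integral a
  simp only [integral_eq_setIntegral_Icc hL] at hmass
  rw [integral_posPart_sub_eq_of_le hf_int (hf_mem.mono fun _ hu ↦ hu.1),
    integral_posPart_sub_eq_of_le hφ_int (hφ.mem_Icc.mono fun _ hu ↦ hu.1), sub_le_sub_iff_right,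
    ← integral_eq_setIntegral_Icc hL, ← integral_eq_setIntegral_Icc hL, hφ.integral_eq] at hmass
  exact ⟨hf, hf_mem, hdom, hmass.antisymm (hdom L (right_mem_Icc.2 hL))⟩

lemma integrableOn_comp (hφ : IsAdmissible a b L F φ) (hh : ContinuousOn h (Icc a b)) :
    IntegrableOn (fun u ↦ h (φ u)) (Icc 0 L) :=
  integrable_comp_of_continuousOn hh hφ.aemeasurable hφ.mem_Icc

lemma integral_comp_le (hab : a < b) (hL : 0 ≤ L) (hh : ConvexOn ℝ (Icc a b) h)
    (hh_cont : ContinuousOn h (Icc a b)) (hf : IsAdmissible a b L F f)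
    (hf_prim : ∀ u ∈ Icc 0 L, ∫ w in (0 : ℝ)..u, f w = lcMaj L F u)
    (hφ : IsAdmissible a b L F φ) :
    ∫ u in (0 : ℝ)..L, h (f u) ≤ ∫ u in (0 : ℝ)..L, h (φ u) := by
  have hhinge := integral_posPart_sub_le_of_integral_eq_lcMaj hL (hf.intervalIntegrable hL)
    (hφ.intervalIntegrable hL) hf_prim hφ.le_integral
  have hmass := (hφ.integral_eq.trans hf.integral_eq.symm).le
  simp only [integral_eq_setIntegral_Icc hL] at hhinge hmass ⊢
  exact integral_comp_le_integral_comp_of_convexOn hab hh hh_cont hf.aemeasurable hφ.aemeasurable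
    hf.mem_Icc hφ.mem_Icc hmass hhinge

end IsAdmissible

theorem stmt15_general {a b L : ℝ} (hab : a < b) (hL : 0 ≤ L) {h F ghat φ : ℝ → ℝ}
    (hh : StrictConvexOn ℝ (Icc a b) h) (hh_cont : ContinuousOn h (Icc a b))
    (hghat_meas : AEMeasurable ghat (volume.restrict (Icc 0 L)))
    (hghat_mem : ∀ᵐ u ∂volume.restrict (Icc 0 L), ghat u ∈ Icc a b)
    (hghat : ∀ u ∈ Icc 0 L, ∫ w in (0 : ℝ)..u, ghat w = lcMaj L F u)
    (hφ : IsAdmissible a b L F φ)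
    (hφ_min : ∫ u in (0 : ℝ)..L, h (φ u) ≤ ∫ u in (0 : ℝ)..L, h (ghat u)) :
    ∀ᵐ u ∂volume.restrict (Icc 0 L), φ u = ghat u := by
  have hghat_adm := hφ.of_integral_eq_lcMaj hL hghat_meas hghat_mem hghat
  have hmid := hφ.half_add hL hghat_adm
  have hmin := hghat_adm.integral_comp_le hab hL hh.convexOn hh_cont hghat hmid
  refine ae_eq_of_le_integral_comp_half_add hh hghat_mem hφ.mem_Icc
    (hghat_adm.integrableOn_comp hh_cont) (hφ.integrableOn_comp hh_cont)
    (hmid.integrableOn_comp hh_cont) ?_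
  simp only [← integral_eq_setIntegral_Icc hL]
  linarith

end Admissible

section BernoulliRelativeEntropy

variable {m : ℝ}

lemma hFun_eq_neg_binEntropy_sub (hm : m ∈ Ioo 0 1) (x : ℝ) :
    hFun m x = -Real.binEntropy x - (x * Real.log m + (1 - x) * Real.log (1 - m)) := by
  have hlog (x : ℝ) {p : ℝ} (hp : p ≠ 0) :
      x * Real.log (x / p) = x * Real.log x - x * Real.log p := by
    rcases eq_or_ne x 0 with rfl | hx
    · simp
    · rw [Real.log_div hx hp, mul_sub]
  rw [hFun, hlog x hm.1.ne', hlog (1 - x) (sub_pos.2 hm.2).ne', Real.binEntropy, Real.log_inv,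
    Real.log_inv]
  ring

lemma continuous_hFun (hm : m ∈ Ioo 0 1) : Continuous (hFun m) := by
  rw [funext (hFun_eq_neg_binEntropy_sub hm)]
  fun_prop

lemma strictConvexOn_hFun (hm : m ∈ Ioo 0 1) : StrictConvexOn ℝ (Icc 0 1) (hFun m) := by
  refine ⟨convex_Icc 0 1, fun x hx y hy hxy p q hp hq hpq ↦ ?_⟩
  have hentropy := Real.strictConcave_binEntropy.2 hx hy hxy hp hq hpq
  obtain rfl : q = 1 - p := eq_sub_of_add_eq' hpq
  simp only [hFun_eq_neg_binEntropy_sub hm, smul_eq_mul] at hentropy ⊢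
  linarith

end BernoulliRelativeEntropy

/-- uniqueness of the minimizer in the variational problem of STATEMENT 14:
any admissible `φ` with `∫_0^L h_m(φ) = ∫_0^L h_m(ĝ)` coincides with `ĝ` almost
everywhere on `[0,L]`. -/
theorem stmt15 (m L : ℝ) (hm : m ∈ Set.Ioo (0:ℝ) 1) (hL : 0 < L)
    (g : ℝ → ℝ) (hgmeas : Measurable g) (hgrange : ∀ u, g u ∈ Set.Icc (0:ℝ) 1)
    (ghat : ℝ → ℝ) (hghatmeas : Measurable ghat) (hghatrange : ∀ u, ghat u ∈ Set.Icc (0:ℝ) 1)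
    (hghat : ∀ u ∈ Set.Icc 0 L,
      (∫ w in (0:ℝ)..u, ghat w) = lcMaj L (fun t => ∫ w in (0:ℝ)..t, g w) u)
    (φ : ℝ → ℝ) (hφmeas : Measurable φ) (hφrange : ∀ u, φ u ∈ Set.Icc (0:ℝ) 1)
    (hφdom : ∀ u ∈ Set.Icc 0 L, (∫ w in (0:ℝ)..u, g w) ≤ ∫ w in (0:ℝ)..u, φ w)
    (hφmass : (∫ w in (0:ℝ)..L, φ w) = ∫ w in (0:ℝ)..L, g w)
    (hφmin : (∫ u in (0:ℝ)..L, hFun m (φ u)) = ∫ u in (0:ℝ)..L, hFun m (ghat u)) :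
    ∀ᵐ u ∂((volume : Measure ℝ).restrict (Set.Icc 0 L)), φ u = ghat u :=
  stmt15_general one_pos hL.le (strictConvexOn_hFun hm) (continuous_hFun hm).continuousOn
    hghatmeas.aemeasurable (.of_forall hghatrange) hghat
    ⟨hφmeas.aemeasurable, .of_forall hφrange, hφdom, hφmass⟩ hφmin.le

end
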